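/- arXiv:2106.10301 — 4 statements merged into one kernel-verified Lean document; each statement's English description precedes it below -/
import Mathlib

section
/- The Pacman cellular automaton (X,T) is cofinitely sensitive: there exists δ > 0 such that for every nonempty open set U ⊆ X, the set N_T(U,δ) = { n ∈ ℕ : diam(T^n U) > δ } is cofinite in ℕ (its complement in ℕ is finite). -/
/-!
Doors never move, ghosts `G` and keymasters `K` move left, pacmen `P` move right, and particles
pass a door only from right to left. Given a cylinder `[-m, m]`, its word is completed to a point
`z` by a door at `M = m + 1` and empty cells elsewhere.

* `z` empties itself to the right of `L = -m - 1` (`Walled.settles`). A particle crosses a room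
  (the cells between two consecutive doors) in three passes: left as `G`, right as `P`, left as `K`,
  and then goes through the left door as `E`. The potential `pot` measures the remaining itinerary,
  and each particle present after a step has an ancestor of larger potential
  (`Walled.ancestor`), so particles disappear after a bounded time.
* A lone particle placed among empty doors also follows this itinerary (`Single.step`): its
  potential drops at each step while its position changes by at most one, so it visits the origin
  after a time `k` that depends only on the doors (`exists_hitting_time`).

Adding to `z` a keymaster at distance `i + 1` to the right of the door `M` has no effect on `z`
until the keymaster stands next to that door, at time `i` (`Walled.update_iterate`). If `i` is
large, `z` is empty by then, so at time `n = i + k` there is a particle at the origin for the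
modified point and none for `z`. Every large `n` is of this form, so `δ = 1/2` works.
-/

/-- The six-letter alphabet of the Pacman cellular automaton:
`O` = empty space, `D` = empty door, `P` = pacman, `G` = ghost,
`K` = keymaster ghost, `E` = door with ghost. -/
inductive PacSym : Type
  | O | D | P | G | K | E
  deriving DecidableEq

open PacSym

/-- The radius-1 local rule `f(a,b,c)` of the Pacman cellular automaton. -/
def pacRule (a b c : PacSym) : PacSym :=
  if ((a = O ∨ a = G ∨ a = K) ∧
        (((b = O ∨ b = G ∨ b = K) ∧ (c = O ∨ c = D ∨ c = P)) ∨
          (b = P ∧ ¬(c = D ∨ c = E)))) ∨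
      ((a = D ∨ a = E) ∧
        (((b = O ∨ b = K) ∧ (c = O ∨ c = D ∨ c = P)) ∨
          (b = P ∧ ¬(c = D ∨ c = E)))) then O
  else if (b = D ∨ b = E) ∧ ¬(c = K ∨ c = E) then D
  else if ((a = O ∨ a = G ∨ a = K) ∧ (b = O ∨ b = G ∨ b = K) ∧ (c = G ∨ c = E)) ∨
      ((a = D ∨ a = E) ∧ (b = O ∨ b = K) ∧ c = E) then G
  else if (c = K ∧ (((a = O ∨ a = G ∨ a = K) ∧ (b = O ∨ b = G ∨ b = K)) ∨
        ((a = D ∨ a = E) ∧ (b = O ∨ b = K)))) ∨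
      (a = P ∧ ¬(b = D ∨ b = E) ∧ (c = D ∨ c = E)) ∨
      (b = P ∧ (c = D ∨ c = E)) then K
  else if (a = D ∧ (((b = O ∨ b = K) ∧ c = G) ∨ b = G)) ∨
      (a = P ∧ ¬(b = D ∨ b = E) ∧ ¬(c = D ∨ c = E)) then P
  else if (b = D ∨ b = E) ∧ (c = K ∨ c = E) then E
  else O

/-- The full shift `X = A^ℤ` over the Pacman alphabet. -/
abbrev PacX : Type := ℤ → PacSym

/-- The Pacman cellular automaton `T : X → X`, `(Tx)_i = f(x_{i-1}, x_i, x_{i+1})`. -/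
def pacT (x : PacX) : PacX := fun i => pacRule (x (i - 1)) (x i) (x (i + 1))

open Classical in
/-- The metric `d(x,y) = 2^{-min{|j| : x_j ≠ y_j}}` for `x ≠ y`, and `0` otherwise. -/
noncomputable def pdist (x y : PacX) : ℝ :=
  if x = y then 0
  else (2 : ℝ) ^ (-((sInf {n : ℕ | ∃ j : ℤ, j.natAbs = n ∧ x j ≠ y j} : ℕ) : ℤ))

/-- The open ball `B_δ(x) = {y : d(x,y) < δ}`. -/
def pball (x : PacX) (δ : ℝ) : Set PacX := {y | pdist x y < δ}

/-- The diameter of a set: `diam S = sup {d(a,b) : a, b ∈ S}`. -/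
noncomputable def pdiam (S : Set PacX) : ℝ := sSup (Set.image2 pdist S S)

/-- The point `x^{w,i} = ⋯0 0.w D 0^i K 0 0⋯`. -/
def xPt (w : List PacSym) (i : ℕ) : PacX := fun j =>
  if 0 ≤ j ∧ j < (w.length : ℤ) then w.getD j.toNat O
  else if j = (w.length : ℤ) then D
  else if j = (w.length : ℤ) + 1 + (i : ℤ) then K
  else O

/-- The point `x^{w} = ⋯0 0.w D 0 0⋯`. -/
def yPt (w : List PacSym) : PacX := fun j =>
  if 0 ≤ j ∧ j < (w.length : ℤ) then w.getD j.toNat O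
  else if j = (w.length : ℤ) then D
  else O

/-! ### Elementary facts about the local rule -/

lemma pacRule_eq_G {a b c : PacSym} (h : pacRule a b c = G) :
    ¬(b = D ∨ b = E) ∧ (c = G ∨ c = E) := by
  revert h; cases a <;> cases b <;> cases c <;> decide

lemma pacRule_eq_K {a b c : PacSym} (h : pacRule a b c = K) :
    ¬(b = D ∨ b = E) ∧ (c = K ∨ a = P ∨ b = P) := by
  revert h; cases a <;> cases b <;> cases c <;> decide

lemma pacRule_eq_P {a b c : PacSym} (h : pacRule a b c = P) :
    ¬(b = D ∨ b = E) ∧ (c = G ∨ b = G ∨ a = P) := by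
  revert h; cases a <;> cases b <;> cases c <;> decide

lemma pacRule_eq_E {a b c : PacSym} (h : pacRule a b c = E) :
    (b = D ∨ b = E) ∧ (c = K ∨ c = E) := by
  revert h; cases a <;> cases b <;> cases c <;> decide

/-- Doors never move. -/
lemma pacRule_door (a b c : PacSym) :
    (pacRule a b c = D ∨ pacRule a b c = E) ↔ (b = D ∨ b = E) := by
  cases a <;> cases b <;> cases c <;> decide

/-- Cells without pacman or door whose left neighbour has neither stay that way. -/
lemma pacRule_left {a b : PacSym} (c : PacSym) (ha : a = O ∨ a = G ∨ a = K)
    (hb : b = O ∨ b = G ∨ b = K) :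
    pacRule a b c = O ∨ pacRule a b c = G ∨ pacRule a b c = K := by
  revert ha hb; cases a <;> cases b <;> cases c <;> decide

/-! ### Walled configurations and the potential -/

/-- A configuration with door set `δ`, with neither doors nor pacmen to the left of `L`, with an
empty door at `M`, and with nothing to the right of `M`. -/
structure Walled (δ : ℤ → Bool) (L M : ℤ) (x : PacX) : Prop where
  left : ∀ i < L, x i = O ∨ x i = G ∨ x i = K
  door : ∀ i, (x i = D ∨ x i = E) ↔ δ i = true
  wall : x M = D
  right : ∀ i, M < i → x i = O

lemma Walled.step {δ : ℤ → Bool} {L M : ℤ} {x : PacX} (h : Walled δ L M x) :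
    Walled δ L M (pacT x) where
  left i hi := pacRule_left _ (h.left _ (by omega)) (h.left _ hi)
  door i := (pacRule_door _ _ _).trans (h.door i)
  wall := by
    have h1 := h.right (M + 1) (by omega)
    simp [pacT, h.wall, h1, pacRule]
  right i hi := by
    have h1 := h.right (i + 1) (by omega)
    have h2 := h.right i hi
    have h3 : x (i - 1) = O ∨ x (i - 1) = D := by
      rcases eq_or_lt_of_le (show M ≤ i - 1 by omega) with h | h'
      · exact Or.inr (h ▸ Walled.wall ‹_›)
      · exact Or.inl (h.right _ h')
    rcases h3 with h3 | h3 <;> simp [pacT, h1, h2, h3, pacRule]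

lemma Walled.iterate {δ : ℤ → Bool} {L M : ℤ} {x : PacX} (h : Walled δ L M x) (n : ℕ) :
    Walled δ L M (pacT^[n] x) := by
  induction n with
  | zero => exact h
  | succ n ih => rw [Function.iterate_succ_apply']; exact ih.step

/-- The number of doors in `[L, j)`, weighted by `4 * W`. -/
def doorWeight (δ : ℤ → Bool) (L W j : ℤ) : ℤ :=
  ∑ k ∈ Finset.range (j - L).toNat, if δ (L + k) then 4 * W else 0

lemma doorWeight_succ (δ : ℤ → Bool) {L j : ℤ} (W : ℤ) (hj : L ≤ j) :
    doorWeight δ L W (j + 1) = doorWeight δ L W j + if δ j then 4 * W else 0 := by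
  obtain ⟨n, rfl⟩ := Int.le.dest hj
  have h1 : (L + n + 1 - L).toNat = n + 1 := by omega
  have h2 : (L + n - L).toNat = n := by omega
  simp only [doorWeight, h1, h2, Finset.sum_range_succ]

lemma doorWeight_nonneg (δ : ℤ → Bool) (L : ℤ) {W : ℤ} (j : ℤ) (hW : 0 ≤ W) :
    0 ≤ doorWeight δ L W j := by
  refine Finset.sum_nonneg fun k _ => ?_
  split_ifs <;> omega

/-- The potential of a particle of type `s` at position `j`. A particle that enters a room does so
as `E`, becomes `G` and moves left, becomes `P` and moves right, becomes `K` and moves left into the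
next door. The potential encodes the lexicographic order on (number of doors to the left, phase,
distance left to travel in that phase); its value at `O` and `D` is irrelevant. -/
def pot (δ : ℤ → Bool) (L M j : ℤ) : PacSym → ℤ
  | E => doorWeight δ L (M - L + 2) j + 3 * (M - L + 2) + (j - L)
  | G => doorWeight δ L (M - L + 2) j + 2 * (M - L + 2) + (j - L)
  | P => doorWeight δ L (M - L + 2) j + (M - L + 2) + (M - j)
  | K => doorWeight δ L (M - L + 2) j + (j - L)
  | O => 0
  | D => 0

/-- The symbol contains a particle. -/
def Occ (s : PacSym) : Prop := s = P ∨ s = G ∨ s = K ∨ s = E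

lemma pot_nonneg (δ : ℤ → Bool) {L M j : ℤ} (s : PacSym) (h1 : L ≤ j) (h2 : j ≤ M) :
    0 ≤ pot δ L M j s := by
  have := doorWeight_nonneg δ L (W := M - L + 2) j (by omega)
  cases s <;> simp only [pot] <;> omega

lemma Walled.lt_of_occ {δ : ℤ → Bool} {L M j : ℤ} {x : PacX} (h : Walled δ L M x)
    (hj : Occ (x j)) : j < M := by
  by_contra hc
  rcases eq_or_lt_of_le (not_lt.1 hc) with rfl | h'
  · simp [h.wall, Occ] at hj
  · simp [h.right j h', Occ] at hj

/-! ### A walled configuration empties itself -/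

/-- Every particle present after one step has an ancestor with larger potential. -/
lemma Walled.ancestor {δ : ℤ → Bool} {L M j : ℤ} {x : PacX} (h : Walled δ L M x)
    (hj : L ≤ j) (ho : Occ (pacT x j)) :
    ∃ i, L ≤ i ∧ Occ (x i) ∧ pot δ L M j (pacT x j) < pot δ L M i (x i) := by
  have hjM := h.step.lt_of_occ ho
  have s1 := doorWeight_succ δ (M - L + 2) hj
  have hd := h.door j
  -- A pacman at `j - 1` is inside the window, and no door separates it from `j`.
  have hP : x (j - 1) = P → L ≤ j - 1 ∧
      doorWeight δ L (M - L + 2) j = doorWeight δ L (M - L + 2) (j - 1) := by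
    intro hp
    have hL : L ≤ j - 1 := by
      by_contra hc
      have := h.left (j - 1) (by omega)
      simp [hp] at this
    have := doorWeight_succ δ (M - L + 2) hL
    have hd' := h.door (j - 1)
    simp only [hp, reduceCtorEq, or_self, false_iff, Bool.not_eq_true] at hd'
    simp only [hd', sub_add_cancel] at this
    exact ⟨hL, by simpa using this⟩
  rcases ho with ho | ho | ho | ho <;> rw [ho]
  · obtain ⟨hb, hc⟩ := pacRule_eq_P ho
    have hδ : δ j = false := by simpa [hb] using hd
    simp only [hδ, Bool.false_eq_true, if_false] at s1
    rcases hc with hc | hc | hc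
    · exact ⟨j + 1, by omega, by simp [hc, Occ], by simp only [hc, pot]; omega⟩
    · exact ⟨j, by omega, by simp [hc, Occ], by simp only [hc, pot]; omega⟩
    · have := hP hc
      exact ⟨j - 1, by omega, by simp [hc, Occ], by simp only [hc, pot]; omega⟩
  · obtain ⟨hb, hc⟩ := pacRule_eq_G ho
    have hδ : δ j = false := by simpa [hb] using hd
    simp only [hδ, Bool.false_eq_true, if_false] at s1
    rcases hc with hc | hc <;>
    exact ⟨j + 1, by omega, by simp [hc, Occ], by simp only [hc, pot]; omega⟩
  · obtain ⟨hb, hc⟩ := pacRule_eq_K ho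
    have hδ : δ j = false := by simpa [hb] using hd
    simp only [hδ, Bool.false_eq_true, if_false] at s1
    rcases hc with hc | hc | hc
    · exact ⟨j + 1, by omega, by simp [hc, Occ], by simp only [hc, pot]; omega⟩
    · have := hP hc
      exact ⟨j - 1, by omega, by simp [hc, Occ], by simp only [hc, pot]; omega⟩
    · exact ⟨j, by omega, by simp [hc, Occ], by simp only [hc, pot]; omega⟩
  · obtain ⟨hb, hc⟩ := pacRule_eq_E ho
    have hδ : δ j = true := hd.1 hb
    simp only [hδ, if_true] at s1
    rcases hc with hc | hc <;>
    exact ⟨j + 1, by omega, by simp [hc, Occ], by simp only [hc, pot]; omega⟩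

/-- From some time on, no particle is left in `[L, ∞)`. -/
lemma Walled.settles {δ : ℤ → Bool} {L M : ℤ} {x : PacX} (h : Walled δ L M x) :
    ∃ N : ℕ, ∀ n ≥ N, ∀ j, L ≤ j → ¬ Occ (pacT^[n] x j) := by
  obtain ⟨C, hC⟩ := ((Set.finite_Icc L M).image fun j => pot δ L M j (x j)).bddAbove
  have key : ∀ n : ℕ, ∀ j, L ≤ j → Occ (pacT^[n] x j) →
      pot δ L M j (pacT^[n] x j) ≤ C - n := by
    intro n
    induction n with
    | zero =>
      intro j hj ho
      simpa using hC ⟨j, ⟨hj, (h.lt_of_occ ho).le⟩, rfl⟩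
    | succ n ih =>
      intro j hj ho
      rw [Function.iterate_succ_apply'] at ho ⊢
      obtain ⟨i, hi, hio, hlt⟩ := (h.iterate n).ancestor hj ho
      have := ih i hi hio
      push_cast
      omega
  refine ⟨C.toNat + 1, fun n hn j hj ho => ?_⟩
  have h1 := key n j hj ho
  have h2 := pot_nonneg δ (pacT^[n] x j) hj ((h.iterate n).lt_of_occ ho).le
  omega

/-! ### The trajectory of a single particle among empty doors -/

/-- The part of `x` in `[L, ∞)` consists of the empty doors `δ` and one particle `s` at `j`;
to the left of `L` there are neither doors nor pacmen. -/
structure Single (δ : ℤ → Bool) (L : ℤ) (j : ℤ) (s : PacSym) (x : PacX) : Prop where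
  left : ∀ i < L, x i = O ∨ x i = G ∨ x i = K
  eq : ∀ i, L ≤ i → x i = if i = j then s else if δ i then D else O

/-- The position and type, one step later, of a lone particle of type `s` at `j`. -/
def nextPart (δ : ℤ → Bool) (j : ℤ) : PacSym → ℤ × PacSym
  | K => if δ (j - 1) then (j - 1, E) else (j - 1, K)
  | E => if δ (j - 1) then (j - 1, E) else (j - 1, G)
  | G => if δ (j - 1) then (j, P) else if δ (j - 2) then (j - 1, P) else (j - 1, G)
  | P => if δ (j + 1) then (j, K) else if δ (j + 2) then (j + 1, K) else (j + 1, P)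
  | O => (j, O)
  | D => (j, D)

lemma nextPart_ge (δ : ℤ → Bool) (j : ℤ) (s : PacSym) : j - 1 ≤ (nextPart δ j s).1 := by
  cases s <;> grind [nextPart]

lemma nextPart_le_succ (δ : ℤ → Bool) (j : ℤ) (s : PacSym) : (nextPart δ j s).1 ≤ j + 1 := by
  cases s <;> grind [nextPart]

lemma Single.step {δ : ℤ → Bool} {L j : ℤ} {s : PacSym} {x : PacX} (h : Single δ L j s x)
    (hL : L ≤ -1) (hj : 1 ≤ j) (hs : Occ s) (hd : s = E ↔ δ j = true) :
    Single δ L (nextPart δ j s).1 (nextPart δ j s).2 (pacT x) := by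
  refine ⟨fun i hi => pacRule_left _ (h.left _ (by omega)) (h.left _ hi), fun i hi => ?_⟩
  have hge := nextPart_ge δ j s
  have hle := nextPart_le_succ δ j s
  simp only [pacT]
  by_cases hfar : i < j - 1 ∨ j + 1 < i
  · -- Away from the particle all cells are empty, up to a possible `G` or `K` at `L - 1`.
    have hb := h.eq i hi
    have hc := h.eq (i + 1) (by omega)
    have ha : (x (i - 1) = if δ (i - 1) then D else O) ∨
        (x (i - 1) = O ∨ x (i - 1) = G ∨ x (i - 1) = K) := by
      rcases eq_or_lt_of_le hi with rfl | h'
      · exact Or.inr (h.left _ (by omega))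
      · have ha := h.eq (i - 1) (by omega)
        rw [if_neg (by omega)] at ha
        exact Or.inl ha
    rw [if_neg (by omega)] at hb hc
    rw [if_neg (by omega), hb, hc]
    rcases ha with ha | ha | ha | ha <;> rw [ha] <;>
      cases δ (i - 1) <;> cases δ i <;> cases δ (i + 1) <;> rfl
  · have x0 := h.eq j (by omega)
    have x1 := h.eq (j + 1) (by omega)
    have x2 := h.eq (j + 2) (by omega)
    have y1 := h.eq (j - 1) (by omega)
    have y2 := h.eq (j - 2) (by omega)
    rw [if_pos rfl] at x0
    rw [if_neg (by omega)] at x1 x2 y1 y2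
    have e1 : j - 1 - 1 = j - 2 := by ring
    have e2 : j + 1 + 1 = j + 2 := by ring
    have d1 := Bool.eq_false_or_eq_true (δ (j - 2))
    have d2 := Bool.eq_false_or_eq_true (δ (j - 1))
    have d3 := Bool.eq_false_or_eq_true (δ (j + 1))
    have d4 := Bool.eq_false_or_eq_true (δ (j + 2))
    have n1 : j ≠ j - 1 := by omega
    have n2 : j + 1 ≠ j - 1 := by omega
    have n3 : j - 1 ≠ j + 1 := by omega
    rcases (show i = j - 1 ∨ i = j ∨ i = j + 1 by omega) with rfl | rfl | rfl
    · rw [e1, sub_add_cancel, y2, y1, x0]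
      rcases hs with rfl | rfl | rfl | rfl <;>
        rcases d1 with d1 | d1 <;> rcases d2 with d2 | d2 <;>
        rcases d3 with d3 | d3 <;> rcases d4 with d4 | d4 <;>
        simp [nextPart, pacRule, d1, d2, d3, d4, n3]
    · rw [y1, x0, x1]
      rcases hs with rfl | rfl | rfl | rfl <;> simp at hd <;>
        rcases d1 with d1 | d1 <;> rcases d2 with d2 | d2 <;>
        rcases d3 with d3 | d3 <;> rcases d4 with d4 | d4 <;>
        simp [nextPart, pacRule, hd, d1, d2, d3, d4, n1]
    · rw [e2, add_sub_cancel_right, x0, x1, x2]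
      rcases hs with rfl | rfl | rfl | rfl <;>
        rcases d1 with d1 | d1 <;> rcases d2 with d2 | d2 <;>
        rcases d3 with d3 | d3 <;> rcases d4 with d4 | d4 <;>
        simp [nextPart, pacRule, d1, d2, d3, d4, n2]

lemma nextPart_occ (δ : ℤ → Bool) (j : ℤ) {s : PacSym} (hs : Occ s) :
    Occ (nextPart δ j s).2 := by
  rcases hs with rfl | rfl | rfl | rfl <;> simp only [nextPart] <;> split_ifs <;> simp [Occ]

lemma nextPart_door (δ : ℤ → Bool) (j : ℤ) {s : PacSym} (hs : Occ s) (hd : s = E ↔ δ j = true) :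
    (nextPart δ j s).2 = E ↔ δ (nextPart δ j s).1 = true := by
  rcases hs with rfl | rfl | rfl | rfl <;> simp only [nextPart] <;> split_ifs <;> simp_all

lemma nextPart_le {δ : ℤ → Bool} {M j : ℤ} {s : PacSym} (hM : δ M = true)
    (hs : Occ s) (hd : s = E ↔ δ j = true) (hj : j ≤ M ∨ j = M + 1 ∧ s = K) :
    (nextPart δ j s).1 ≤ M := by
  have hjM : s = P → j < M := by
    rintro rfl
    rcases hj with hj | hj
    · refine lt_of_le_of_ne hj ?_
      rintro rfl
      simp [hM] at hd
    · simp at hj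
  rcases hs with rfl | rfl | rfl | rfl <;> simp only [nextPart] <;> split_ifs <;>
    simp at hjM hj ⊢ <;> omega

lemma nextPart_pot {δ : ℤ → Bool} {L M j : ℤ} {s : PacSym} (hL : L ≤ -1) (hj1 : 1 ≤ j)
    (hj : j ≤ M ∨ j = M + 1 ∧ s = K) (hs : Occ s) (hd : s = E ↔ δ j = true) :
    pot δ L M (nextPart δ j s).1 (nextPart δ j s).2 < pot δ L M j s := by
  have h0 := doorWeight_succ δ (M - L + 2) (show L ≤ j by omega)
  have h1 := doorWeight_succ δ (M - L + 2) (show L ≤ j - 1 by omega)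
  rw [sub_add_cancel] at h1
  rcases hs with rfl | rfl | rfl | rfl <;> simp only [nextPart] <;> split_ifs <;>
    simp_all [pot] <;> omega

/-- A lone particle starting in `[0, M]`, or as a keymaster at `M + 1`, is at the origin after a number of steps that depends
only on the doors. -/
lemma exists_hitting_time {δ : ℤ → Bool} {L M : ℤ} (hL : L ≤ -1) (hM : δ M = true) :
    ∀ (N : ℕ) (j : ℤ) (s : PacSym), 0 ≤ j → (j ≤ M ∨ j = M + 1 ∧ s = K) → Occ s →
      (s = E ↔ δ j = true) → pot δ L M j s < N →
      ∃ k : ℕ, ∀ x, Single δ L j s x → Occ (pacT^[k] x 0) := by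
  intro N
  induction N with
  | zero =>
    intro j s h0 hj hs hd hp
    have := doorWeight_nonneg δ L (W := M - L + 2) j (by omega)
    rcases hs with rfl | rfl | rfl | rfl <;> simp [pot] at hp hj <;> omega
  | succ N ih =>
    intro j s h0 hj hs hd hp
    rcases eq_or_lt_of_le h0 with rfl | hpos
    · refine ⟨0, fun x hx => ?_⟩
      have := hx.eq 0 (by omega)
      simpa [this] using hs
    · have hlt := nextPart_pot hL hpos hj hs hd
      have hge := nextPart_ge δ j s
      obtain ⟨k, hk⟩ := ih _ _ (by omega) (Or.inl (nextPart_le hM hs hd hj))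
        (nextPart_occ δ j hs) (nextPart_door δ j hs hd) (by push_cast at hp; omega)
      refine ⟨k + 1, fun x hx => ?_⟩
      rw [Function.iterate_succ_apply]
      exact hk _ (hx.step hL hpos hs hd)

/-! ### The approaching keymaster -/

/-- A keymaster to the right of the wall moves left without influencing anything else. -/
lemma Walled.update_step {δ : ℤ → Bool} {L M p : ℤ} {z : PacX} (h : Walled δ L M z)
    (hp : M + 2 ≤ p) :
    pacT (Function.update z p K) = Function.update (pacT z) (p - 1) K := by
  funext i
  have h1 : z p = O := h.right p (by omega)
  have h2 : z (p + 1) = O := h.right _ (by omega)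
  have h3 : z (p - 1) = O := h.right _ (by omega)
  have h4 : z (p + 2) = O := h.right _ (by omega)
  have h5 : z (p - 2) = O ∨ z (p - 2) = D := by
    rcases eq_or_lt_of_le (show M ≤ p - 2 by omega) with h' | h'
    · exact Or.inr (h' ▸ h.wall)
    · exact Or.inl (h.right _ h')
  have e1 : p - 1 - 1 = p - 2 := by ring
  have e2 : p + 1 + 1 = p + 2 := by ring
  have n1 : p ≠ p - 1 := by omega
  have n2 : p + 1 ≠ p - 1 := by omega
  by_cases hfar : i < p - 1 ∨ p + 1 < i
  · rw [Function.update_of_ne (by omega)]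
    simp only [pacT]
    rw [Function.update_of_ne (by omega), Function.update_of_ne (by omega),
      Function.update_of_ne (by omega)]
  · rcases (show i = p - 1 ∨ i = p ∨ i = p + 1 by omega) with rfl | rfl | rfl
    · rcases h5 with h5 | h5 <;> simp [pacT, pacRule, h3, h5, e1]
    · simp [pacT, pacRule, h1, h2, h3, n1]
    · simp [pacT, pacRule, h1, h2, h4, e2, n2]

lemma Walled.update_iterate {δ : ℤ → Bool} {L M : ℤ} {z : PacX} (h : Walled δ L M z)
    (i n : ℕ) (hn : n ≤ i) :
    pacT^[n] (Function.update z (M + 1 + i) K) =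
      Function.update (pacT^[n] z) (M + 1 + i - n) K := by
  induction n with
  | zero => simp
  | succ n ih =>
    rw [Function.iterate_succ_apply', Function.iterate_succ_apply', ih (by omega),
      (h.iterate n).update_step (by omega)]
    congr 1
    push_cast
    ring

/-- Adding a suitable keymaster to a walled configuration changes the `n`-th iterate at the origin,
for every large `n`. -/
lemma Walled.sensitive {δ : ℤ → Bool} {L M : ℤ} {z : PacX} (h : Walled δ L M z)
    (hL : L ≤ -1) (hM : 0 ≤ M) :
    ∃ N : ℕ, ∀ n ≥ N, ∃ p > M, pacT^[n] (Function.update z p K) 0 ≠ pacT^[n] z 0 := by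
  obtain ⟨N, hN⟩ := h.settles
  have hδM : δ M = true := (h.door M).1 (Or.inl h.wall)
  have hδ : ¬ δ (M + 1) = true := by
    rw [← h.door, h.right _ (by omega)]; simp
  obtain ⟨k, hk⟩ := exists_hitting_time hL hδM ((pot δ L M (M + 1) K).toNat + 1) (M + 1) K
    (by omega) (Or.inr ⟨rfl, rfl⟩) (by simp [Occ]) (by simp [hδ]) (by push_cast; omega)
  refine ⟨N + k, fun n hn => ?_⟩
  obtain ⟨i, rfl⟩ : ∃ i, n = k + i := ⟨n - k, by omega⟩
  refine ⟨M + 1 + i, by omega, fun heq => hN (k + i) (by omega) 0 (by omega) ?_⟩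
  rw [← heq, Function.iterate_add_apply, h.update_iterate i i le_rfl]
  have hw := h.iterate i
  refine hk _ ⟨fun j hj => ?_, fun j hj => ?_⟩
  · rw [Function.update_of_ne (by omega)]
    exact hw.left j hj
  · have e : M + 1 + (i : ℤ) - i = M + 1 := by ring
    rw [e, Function.update_apply]
    split_ifs with hp hd
    · rfl
    · have := (hw.door j).2 hd
      have := hN i (by omega) j hj
      simp only [Occ] at this
      tauto
    · have := (hw.door j).not.2 ‹_›
      have := hN i (by omega) j hj
      simp only [Occ] at this
      cases hh : pacT^[i] z j <;> simp_all

/-! ### The metric -/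

lemma pdist_le_one (x y : PacX) : pdist x y ≤ 1 := by
  unfold pdist
  split_ifs
  · norm_num
  · exact zpow_le_one_of_nonpos₀ (by norm_num) (by simp)

lemma pdist_eq_one {x y : PacX} (h : x 0 ≠ y 0) : pdist x y = 1 := by
  have h1 : x ≠ y := fun e => h (e ▸ rfl)
  have h2 : sInf {n : ℕ | ∃ j : ℤ, j.natAbs = n ∧ x j ≠ y j} = 0 :=
    Nat.sInf_eq_zero.2 (Or.inl ⟨0, rfl, h⟩)
  simp [pdist, h1, h2]

lemma pdist_lt_of_agree {x y : PacX} {m : ℕ} {ε : ℝ} (hm : (1 / 2 : ℝ) ^ m < ε) (hε : 0 < ε)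
    (h : ∀ j : ℤ, j.natAbs ≤ m → x j = y j) : pdist x y < ε := by
  unfold pdist
  split_ifs with hxy
  · exact hε
  · obtain ⟨j, hj⟩ := Function.ne_iff.1 hxy
    obtain ⟨i, hi, hne⟩ := Nat.sInf_mem (s := {n : ℕ | ∃ j : ℤ, j.natAbs = n ∧ x j ≠ y j})
      ⟨_, j, rfl, hj⟩
    refine lt_of_le_of_lt ?_ hm
    rw [zpow_neg, zpow_natCast, one_div, inv_pow]
    gcongr
    · norm_num
    · by_contra hc
      exact hne (h i (by omega))

lemma one_le_pdiam {S : Set PacX} {x y : PacX} (hx : x ∈ S) (hy : y ∈ S) (h : x 0 ≠ y 0) :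
    1 ≤ pdiam S := by
  rw [← pdist_eq_one h]
  refine le_csSup ⟨1, ?_⟩ ⟨x, hx, y, hy, rfl⟩
  rintro _ ⟨a, _, b, _, rfl⟩
  exact pdist_le_one a b

/-- The Pacman cellular automaton is cofinitely sensitive: there is a `δ > 0` such that
for every nonempty (metrically) open set `U`, the set `{n | diam (T^n U) > δ}` is cofinite. -/
theorem pacman_cofinitely_sensitive :
    ∃ δ > (0 : ℝ), ∀ U : Set PacX, U.Nonempty →
      (∀ y ∈ U, ∃ ε > (0 : ℝ), pball y ε ⊆ U) →
      {n : ℕ | pdiam (pacT^[n] '' U) > δ}ᶜ.Finite := by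
  refine ⟨1 / 2, by norm_num, fun U ⟨u, hu⟩ hU => ?_⟩
  obtain ⟨ε, hε, hball⟩ := hU u hu
  obtain ⟨m, hm⟩ := exists_pow_lt_of_lt_one hε (show (1 / 2 : ℝ) < 1 by norm_num)
  have hmem : ∀ x : PacX, (∀ j : ℤ, j.natAbs ≤ m → u j = x j) → x ∈ U := fun x hx =>
    hball (pdist_lt_of_agree hm hε hx)
  -- Keep `u` on `[-m, m]`, put a door at `m + 1`, and leave everything else empty.
  let z : PacX := fun j => if j.natAbs ≤ m then u j else if j = m + 1 then D else O
  have hz : Walled (fun j => decide (z j = D ∨ z j = E)) (-m - 1) (m + 1) z := by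
    refine ⟨fun i hi => Or.inl ?_, fun i => by simp, ?_, fun i hi => ?_⟩
    · simp only [z]; rw [if_neg (by omega), if_neg (by omega)]
    · simp only [z]; rw [if_neg (by omega)]; simp
    · simp only [z]; rw [if_neg (by omega), if_neg (by omega)]
  have hzu : ∀ j : ℤ, j.natAbs ≤ m → u j = z j := fun j hj => (if_pos hj).symm
  obtain ⟨N, hN⟩ := hz.sensitive (by omega) (by omega)
  refine (Set.finite_lt_nat N).subset fun n hn => ?_
  by_contra hc
  obtain ⟨p, hp, hne⟩ := hN n (not_lt.1 hc)
  refine hn (lt_of_lt_of_le (by norm_num : (1 / 2 : ℝ) < 1) (one_le_pdiam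
    (Set.mem_image_of_mem _ (hmem (Function.update z p K) fun j hj => ?_))
    (Set.mem_image_of_mem _ (hmem z hzu)) hne))
  rw [Function.update_of_ne (by omega)]
  exact hzu j hj
end

section
/- Let (X,T) be the Pacman cellular automaton, m > 0, w ∈ A^m a finite word, and x = ... 0 0 . w D 0 0 ... (that is, x_j = w_j for 0 ≤ j ≤ m − 1, x_m = D, and x_j = 0 for all other j ∈ ℤ, where 0 = empty space and D = empty door). Then there exists N > 0 such that for all n ≥ N and all i ≥ 0, T^n x_i ∈ {0, D}. -/
open PacSym

/-- The symbol is a door, empty or with a ghost in it. -/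
def IsDoor (s : PacSym) : Prop := s = D ∨ s = E

instance : DecidablePred IsDoor := fun s => inferInstanceAs (Decidable (s = D ∨ s = E))

/-! ### The local rule -/

lemma isDoor_rule (a b c : PacSym) : IsDoor (pacRule a b c) ↔ IsDoor b := by
  cases a <;> cases b <;> cases c <;> decide

lemma rule_eq_P {a b c : PacSym} (h : pacRule a b c = P) :
    ¬ IsDoor b ∧ (a = P ∨ (a = D ∧ b = G) ∨ (a = D ∧ c = G)) := by
  revert h
  cases a <;> cases b <;> cases c <;> decide

lemma rule_eq_K {a b c : PacSym} (h : pacRule a b c = K) :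
    ¬ IsDoor b ∧ (c = K ∨ a = P ∨ b = P) := by
  revert h
  cases a <;> cases b <;> cases c <;> decide

lemma rule_eq_G {a b c : PacSym} (h : pacRule a b c = G) :
    ¬ IsDoor b ∧ (c = G ∨ c = E) := by
  revert h
  cases a <;> cases b <;> cases c <;> decide

lemma rule_eq_E {a b c : PacSym} (h : pacRule a b c = E) :
    IsDoor b ∧ (c = K ∨ c = E) := by
  revert h
  cases a <;> cases b <;> cases c <;> decide

/-! ### Counting doors and the potential -/

/-- The number of doors of `x` in the cells `0, …, i - 1`. -/
noncomputable def doorCount (x : PacX) (i : ℤ) : ℕ :=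
  ((Finset.Ico 0 i).filter (fun j => IsDoor (x j))).card

lemma doorCount_pacT (x : PacX) (i : ℤ) : doorCount (pacT x) i = doorCount x i := by
  unfold doorCount pacT
  simp only [isDoor_rule]

lemma doorCount_succ_of_door {x : PacX} {i : ℤ} (hi : 0 ≤ i) (h : IsDoor (x i)) :
    doorCount x (i + 1) = doorCount x i + 1 := by
  unfold doorCount
  have hI : Finset.Ico 0 (i + 1) = insert i (Finset.Ico 0 i) := by
    ext j; simp only [Finset.mem_Ico, Finset.mem_insert]; omega
  rw [hI, Finset.filter_insert, if_pos h, Finset.card_insert_of_notMem (by simp)]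

lemma doorCount_succ_of_not_door {x : PacX} {i : ℤ} (hi : 0 ≤ i) (h : ¬ IsDoor (x i)) :
    doorCount x (i + 1) = doorCount x i := by
  unfold doorCount
  have hI : Finset.Ico 0 (i + 1) = insert i (Finset.Ico 0 i) := by
    ext j; simp only [Finset.mem_Ico, Finset.mem_insert]; omega
  rw [hI, Finset.filter_insert, if_neg h]

lemma doorCount_le (x : PacX) {i : ℤ} (hi : 0 ≤ i) : (doorCount x i : ℤ) ≤ i := by
  have h : doorCount x i ≤ (Finset.Ico 0 i).card := Finset.card_filter_le _ _
  rw [Int.card_Ico] at h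
  omega

/-- Phase and position of the symbol `s` at the cell `i ∈ [0, m]`: the phases occupy consecutive
blocks of length `m + 1`, and inside a block the value decreases along the motion (to the right for
a pacman, to the left otherwise). Its value lies in `[0, 4 (m + 1))`. -/
def phaseVal (m i : ℤ) : PacSym → ℤ
  | E => 3 * (m + 1) + i
  | G => 2 * (m + 1) + i
  | P => (m + 1) + (m - i)
  | K => i
  | O => 0
  | D => 0

/-- The potential of the creature of `x` at the cell `i`: the lexicographic combination of the
number of doors to the left of `i` with phase and position. -/
noncomputable def creatureVal (m : ℤ) (x : PacX) (i : ℤ) : ℤ :=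
  4 * (m + 1) * doorCount x i + phaseVal m i (x i)

/-- The configuration is empty to the right of an empty door at `m`, and has only empty space and
left-moving ghosts to the left of `0`. -/
structure Confined (m : ℤ) (x : PacX) : Prop where
  right : ∀ i, m < i → x i = O
  last : x m = D
  left : ∀ i, i < 0 → x i = O ∨ x i = G ∨ x i = K

lemma Confined.pacT {m : ℤ} {x : PacX} (h : Confined m x) :
    Confined m (pacT x) := by
  refine ⟨fun i hi => ?_, ?_, fun i hi => ?_⟩
  · have h1 := h.right i hi
    have h2 := h.right (i + 1) (by omega)
    have h3 : x (i - 1) = O ∨ x (i - 1) = D := by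
      rcases eq_or_lt_of_le (show m ≤ i - 1 by omega) with e | e
      · exact Or.inr (e ▸ h.last)
      · exact Or.inl (h.right _ e)
    simp only [_root_.pacT, h1, h2]
    rcases h3 with h3 | h3 <;> rw [h3] <;> decide
  · simp only [_root_.pacT, h.last, h.right (m + 1) (by omega)]
    cases x (m - 1) <;> decide
  · have h1 := h.left i hi
    have h2 := h.left (i - 1) (by omega)
    simp only [_root_.pacT]
    generalize x (i - 1) = a at *
    generalize x i = b at *
    generalize x (i + 1) = c
    rcases h1 with rfl | rfl | rfl <;> rcases h2 with rfl | rfl | rfl <;> cases c <;> decide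

/-- Every creature in `[0, m]` after one step descends from a creature in `[0, m]` of strictly
larger potential. -/
lemma exists_pred {m : ℤ} {x : PacX} (hx : Confined m x) {i : ℤ} (h0 : 0 ≤ i)
    (hi : i ≤ m) (hO : pacT x i ≠ O) (hD : pacT x i ≠ D) :
    ∃ j, 0 ≤ j ∧ j ≤ m ∧ x j ≠ O ∧ x j ≠ D ∧
      creatureVal m (pacT x) i + 1 ≤ creatureVal m x j := by
  have him : i < m := by
    refine lt_of_le_of_ne hi fun e => hD ?_
    rw [e]
    exact hx.pacT.last
  -- A pacman on the left of `i` is still inside the window, in the same room as `i`.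
  have hprev : x (i - 1) = P → 0 ≤ i - 1 ∧ doorCount x i = doorCount x (i - 1) := by
    intro hP
    have h1 : 0 ≤ i - 1 := by
      by_contra hneg
      have := hx.left (i - 1) (by omega)
      simp [hP] at this
    refine ⟨h1, ?_⟩
    have := doorCount_succ_of_not_door (x := x) h1 (by rw [hP]; decide)
    rwa [sub_add_cancel] at this
  have hrule : pacRule (x (i - 1)) (x i) (x (i + 1)) = pacT x i := rfl
  have hval : creatureVal m (pacT x) i
      = 4 * (m + 1) * doorCount x i + phaseVal m i (pacT x i) := by
    rw [creatureVal, doorCount_pacT]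
  rw [hval]
  unfold creatureVal
  cases hs : pacT x i with
  | O => exact absurd hs hO
  | D => exact absurd hs hD
  | P =>
    rw [hs] at hrule
    obtain ⟨hb, ha | ⟨-, hG⟩ | ⟨-, hG⟩⟩ := rule_eq_P hrule
    · obtain ⟨h1, h2⟩ := hprev ha
      refine ⟨i - 1, h1, by omega, by simp [ha], by simp [ha], ?_⟩
      rw [h2, ha]; simp only [phaseVal]; linarith
    · refine ⟨i, h0, hi, by simp [hG], by simp [hG], ?_⟩
      rw [hG]; simp only [phaseVal]; linarith
    · refine ⟨i + 1, by omega, by omega, by simp [hG], by simp [hG], ?_⟩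
      rw [hG, doorCount_succ_of_not_door h0 hb]; simp only [phaseVal]; linarith
  | G =>
    rw [hs] at hrule
    obtain ⟨hb, hc | hc⟩ := rule_eq_G hrule <;>
    · refine ⟨i + 1, by omega, by omega, by simp [hc], by simp [hc], ?_⟩
      rw [hc, doorCount_succ_of_not_door h0 hb]; simp only [phaseVal]; linarith
  | K =>
    rw [hs] at hrule
    obtain ⟨hb, hc | ha | hP⟩ := rule_eq_K hrule
    · refine ⟨i + 1, by omega, by omega, by simp [hc], by simp [hc], ?_⟩
      rw [hc, doorCount_succ_of_not_door h0 hb]; simp only [phaseVal]; linarith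
    · obtain ⟨h1, h2⟩ := hprev ha
      refine ⟨i - 1, h1, by omega, by simp [ha], by simp [ha], ?_⟩
      rw [h2, ha]; simp only [phaseVal]; linarith
    · refine ⟨i, h0, hi, by simp [hP], by simp [hP], ?_⟩
      rw [hP]; simp only [phaseVal]; linarith
  | E =>
    rw [hs] at hrule
    -- The creature comes from the next room on the right, whose door count is larger by one.
    obtain ⟨hb, hc | hc⟩ := rule_eq_E hrule <;>
    · refine ⟨i + 1, by omega, by omega, by simp [hc], by simp [hc], ?_⟩
      rw [hc, doorCount_succ_of_door h0 hb]; push_cast; simp only [phaseVal]; linarith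

lemma phaseVal_nonneg {m i : ℤ} (h0 : 0 ≤ i) (hi : i ≤ m) (s : PacSym) : 0 ≤ phaseVal m i s := by
  cases s <;> simp only [phaseVal] <;> linarith

lemma phaseVal_le {m i : ℤ} (h0 : 0 ≤ i) (hi : i ≤ m) (s : PacSym) :
    phaseVal m i s ≤ 4 * (m + 1) := by
  cases s <;> simp only [phaseVal] <;> linarith

/-! ### Iteration -/

lemma Confined.iterate {m : ℤ} {x : PacX} (h : Confined m x) (n : ℕ) :
    Confined m (_root_.pacT^[n] x) := by
  induction n with
  | zero => exact h
  | succ n ih => rw [Function.iterate_succ_apply']; exact ih.pacT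

/-- After `n` steps the largest potential in the window has dropped by at least `n`. -/
lemma creatureVal_iterate_le {m : ℤ} {x : PacX} (hm : 0 ≤ m) (h : Confined m x) (n : ℕ) :
    ∀ i, 0 ≤ i → i ≤ m → pacT^[n] x i ≠ O → pacT^[n] x i ≠ D →
      creatureVal m (pacT^[n] x) i + n ≤ 4 * (m + 1) * m + 4 * (m + 1) := by
  induction n with
  | zero =>
    intro i h0 hi _ _
    have h1 := doorCount_le x h0
    have h2 := phaseVal_le h0 hi (x i)
    have h3 : 4 * (m + 1) * (doorCount x i : ℤ) ≤ 4 * (m + 1) * m :=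
      mul_le_mul_of_nonneg_left (by omega) (by omega)
    simp only [creatureVal, Function.iterate_zero, id, Nat.cast_zero]
    linarith
  | succ n ih =>
    intro i h0 hi hO hD
    rw [Function.iterate_succ_apply'] at hO hD ⊢
    obtain ⟨j, hj0, hj, hjO, hjD, hlt⟩ := exists_pred (h.iterate n) h0 hi hO hD
    have := ih j hj0 hj hjO hjD
    push_cast
    linarith

lemma confined_yPt (w : List PacSym) : Confined w.length (yPt w) := by
  refine ⟨fun i hi => ?_, ?_, fun i hi => Or.inl ?_⟩
  · rw [yPt, if_neg (by omega), if_neg (by omega)]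
  · rw [yPt, if_neg (by omega), if_pos rfl]
  · rw [yPt, if_neg (by omega), if_neg (by omega)]

/-- Lemma: for `x = ⋯0.w D 0⋯` with `|w| = m > 0`, there is `N > 0` such that for all
`n ≥ N` and all `i ≥ 0`, `T^n x_i ∈ {0, D}`. -/
theorem pacman_right_side_clears (w : List PacSym) (hm : 0 < w.length) :
    ∃ N : ℕ, 0 < N ∧ ∀ n : ℕ, N ≤ n → ∀ i : ℤ, 0 ≤ i →
      (pacT^[n] (yPt w)) i ∈ ({O, D} : Set PacSym) := by
  have hc := confined_yPt w
  generalize hl : w.length = l at *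
  have hl0 : (0 : ℤ) ≤ l := by omega
  -- One more than the bound on the initial potential.
  refine ⟨4 * (l + 1) * l + 4 * (l + 1) + 1, by omega, fun n hn i h0 => ?_⟩
  rw [Set.mem_insert_iff, Set.mem_singleton_iff]
  by_contra hne
  rw [not_or] at hne
  rcases le_or_gt i l with hi | hi
  · have h1 := creatureVal_iterate_le hl0 hc n i h0 hi hne.1 hne.2
    have h2 : 0 ≤ creatureVal l (pacT^[n] (yPt w)) i :=
      add_nonneg (by positivity) (phaseVal_nonneg h0 hi _)
    zify at hn
    linarith
  · exact hne.1 ((hc.iterate n).right i hi)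
end

section
/- Let (X,T) be the Pacman cellular automaton and let w ∈ {0, D}^m be a finite word over the symbols 0 (empty space) and D (empty door). For each i ≥ 0 define x^i = ... 0 0 . w D 0^i K 0 0 ... (that is, x^i_j = w_j for 0 ≤ j ≤ m − 1, x^i_m = D, x^i_{m+1+i} = K, and x^i_j = 0 for all other j ∈ ℤ). Then for every i ≥ 1, T x^i = x^{i−1}. -/
open PacSym

/-- Away from the keymaster's cell, `xPt w i` is the ghost-free configuration `yPt w`. -/
lemma xPt_eq (w : List PacSym) (i : ℕ) (j : ℤ) :
    xPt w i j = if j = (w.length : ℤ) + 1 + i then K else yPt w j := by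
  unfold xPt yPt
  split_ifs <;> first | rfl | omega

lemma yPt_cases (w : List PacSym) (hw : ∀ s ∈ w, s = O ∨ s = D) (j : ℤ) :
    yPt w j = O ∨ yPt w j = D := by
  unfold yPt
  split_ifs with h1 h2
  · have hlt : j.toNat < w.length := by omega
    rw [List.getD_eq_getElem _ _ hlt]
    exact hw _ (List.getElem_mem hlt)
  · exact Or.inr rfl
  · exact Or.inl rfl

lemma yPt_of_lt (w : List PacSym) {j : ℤ} (hj : (w.length : ℤ) < j) : yPt w j = O := by
  unfold yPt
  rw [if_neg (by omega), if_neg (by omega)]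

/-- Configurations of empty spaces and empty doors do not evolve. -/
lemma pacRule_static {a b c : PacSym} (ha : a = O ∨ a = D) (hb : b = O ∨ b = D)
    (hc : c = O ∨ c = D) : pacRule a b c = b := by
  rcases ha with rfl | rfl <;> rcases hb with rfl | rfl <;> rcases hc with rfl | rfl <;> rfl

/-- A keymaster moves left into an empty space, also when that space lies right of a door. -/
lemma pacRule_arrive {a : PacSym} (ha : a = O ∨ a = D) : pacRule a O K = K := by
  rcases ha with rfl | rfl <;> rfl

/-- If `w` consists only of empty spaces and empty doors, then for
`x^i = ⋯0.w D 0^i K 0⋯` we have `T x^i = x^{i-1}` for every `i ≥ 1`. -/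
theorem pacman_keymaster_translates (w : List PacSym) (hw : ∀ s ∈ w, s = O ∨ s = D) :
    ∀ i : ℕ, 1 ≤ i → pacT (xPt w i) = xPt w (i - 1) := by
  intro i hi
  funext j
  have hp : xPt w i ((w.length : ℤ) + 1 + i) = K := by simp [xPt_eq]
  have hK : ∀ k : ℤ, k ≠ (w.length : ℤ) + 1 + i → xPt w i k = yPt w k := fun k hk => by
    rw [xPt_eq, if_neg hk]
  have hi' : ((i - 1 : ℕ) : ℤ) = (i : ℤ) - 1 := by omega
  rw [xPt_eq w (i - 1), hi']
  simp only [pacT]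
  rcases eq_or_ne j ((w.length : ℤ) + i) with h1 | h1
  · -- The cell just left of the keymaster receives it.
    subst h1
    rw [if_pos (by ring), hK _ (by omega), hK _ (by omega),
      show (w.length : ℤ) + i + 1 = (w.length : ℤ) + 1 + i by ring, hp,
      yPt_of_lt w (j := (w.length : ℤ) + i) (by omega)]
    exact pacRule_arrive (yPt_cases w hw _)
  rw [if_neg (by omega)]
  rcases eq_or_ne j ((w.length : ℤ) + 1 + i) with h2 | h2
  · -- The keymaster leaves its cell, whose left neighbour is empty because `1 ≤ i`.
    subst h2
    rw [hp, hK _ (by omega), hK _ (by omega), yPt_of_lt w (by omega), yPt_of_lt w (by omega),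
      yPt_of_lt w (by omega)]
    rfl
  rw [hK j h2, hK (j + 1) (by omega)]
  rcases eq_or_ne j ((w.length : ℤ) + 2 + i) with h3 | h3
  · -- The cell just right of the keymaster lies in the empty tail.
    subst h3
    rw [show (w.length : ℤ) + 2 + i - 1 = (w.length : ℤ) + 1 + i by ring, hp,
      yPt_of_lt w (by omega), yPt_of_lt w (by omega)]
    rfl
  rw [hK (j - 1) (by omega)]
  exact pacRule_static (yPt_cases w hw _) (yPt_cases w hw _) (yPt_cases w hw _)
end

section
/- Let (X,T) be a cellular automaton, i.e., X = A^ℤ is a full shift over a finite alphabet A with metric d(x,y) = 2^{-min{|j| : x_j ≠ y_j}} (and 0 if x = y), and T : X → X is continuous and commutes with the shift map σ given by σ(x)_i = x_{i+1}. If x ∈ X is an equicontinuity point of (X,T), then x is locally eventually periodic: for every i ∈ ℤ, the sequence n ↦ T^n x_i is eventually periodic, i.e., there exist N ≥ 0 and p ≥ 1 such that T^{n+p} x_i = T^n x_i for all n ≥ N. -/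
/-!
Fix a cell `i`. Equicontinuity at `x` provides `m` such that every configuration agreeing with `x`
on `[-m, m]` has the same column at `i` as `x`, at all times. One such configuration is the
spatially periodic extension `y` of the word `x_{[-m, m]}`. Since `T` commutes with the shift, all
iterates `T^n y` have spatial period `2m + 1`; there are finitely many configurations of that
period, so the orbit of `y` is eventually periodic, and with it the column of `x` at `i`.
-/

open Classical in
/-- The metric `d(x,y) = 2^{-min{|j| : x_j ≠ y_j}}` on a full shift `A^ℤ`
(`0` if `x = y`). -/
noncomputable def sdist {A : Type*} (x y : ℤ → A) : ℝ :=
  if x = y then 0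
  else (2 : ℝ) ^ (-((sInf {n : ℕ | ∃ j : ℤ, j.natAbs = n ∧ x j ≠ y j} : ℕ) : ℤ))

/-- The open ball `B_δ(x)` in a full shift. -/
def sball {A : Type*} (x : ℤ → A) (δ : ℝ) : Set (ℤ → A) := {y | sdist x y < δ}

/-- The diameter of a subset of a full shift. -/
noncomputable def sdiam {A : Type*} (S : Set (ℤ → A)) : ℝ := sSup (Set.image2 sdist S S)

theorem sdist_le_one {A : Type*} (x y : ℤ → A) : sdist x y ≤ 1 := by
  unfold sdist
  split_ifs
  · exact zero_le_one
  · exact zpow_le_one_of_nonpos₀ (by norm_num) (by omega)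

theorem eq_of_sdist_lt {A : Type*} {x y : ℤ → A} {i : ℤ}
    (h : sdist x y < (2 : ℝ) ^ (-(i.natAbs : ℤ))) : x i = y i := by
  by_contra hne
  have hxy : x ≠ y := fun h => hne (by rw [h])
  rw [sdist, if_neg hxy] at h
  have h1 : sInf {n : ℕ | ∃ j : ℤ, j.natAbs = n ∧ x j ≠ y j} ≤ i.natAbs :=
    Nat.sInf_le ⟨i, rfl, hne⟩
  have h2 := (zpow_lt_zpow_iff_right₀ (by norm_num : (1 : ℝ) < 2)).1 h
  omega

theorem sdist_le_of_agree {A : Type*} {x y : ℤ → A} {m : ℕ}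
    (h : ∀ j : ℤ, j.natAbs ≤ m → x j = y j) : sdist x y ≤ (2 : ℝ) ^ (-(m : ℤ)) := by
  unfold sdist
  split_ifs with hxy
  · positivity
  · obtain ⟨j, hj⟩ := Function.ne_iff.1 hxy
    obtain ⟨k, hk, hk'⟩ := Nat.sInf_mem
      (s := {n : ℕ | ∃ j : ℤ, j.natAbs = n ∧ x j ≠ y j}) ⟨_, j, rfl, hj⟩
    have : m < k.natAbs := by
      by_contra hle
      exact hk' (h k (by omega))
    exact zpow_le_zpow_right₀ (by norm_num) (by omega)

theorem sdist_le_sdiam {A : Type*} {S : Set (ℤ → A)} {x y : ℤ → A} (hx : x ∈ S) (hy : y ∈ S) :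
    sdist x y ≤ sdiam S := by
  refine le_csSup ⟨1, ?_⟩ (Set.mem_image2_of_mem hx hy)
  rintro _ ⟨a, _, b, _, rfl⟩
  exact sdist_le_one a b

theorem map_shift_nat {A : Type*} {T : (ℤ → A) → (ℤ → A)}
    (hcomm : ∀ x : ℤ → A, T (fun j => x (j + 1)) = fun j => T x (j + 1)) (k : ℕ) (x : ℤ → A) :
    T (fun j => x (j + k)) = fun j => T x (j + k) := by
  induction k generalizing x with
  | zero => simp
  | succ k ih =>
    have h := hcomm (fun j => x (j + k))
    rw [ih] at h
    have e : ∀ j : ℤ, j + ((k + 1 : ℕ) : ℤ) = j + 1 + k := fun j => by push_cast; ring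
    simpa only [e] using h

theorem iterate_periodic {A : Type*} {T : (ℤ → A) → (ℤ → A)}
    (hcomm : ∀ x : ℤ → A, T (fun j => x (j + 1)) = fun j => T x (j + 1)) {k : ℕ} {y : ℤ → A}
    (hy : Function.Periodic y (k : ℤ)) (n : ℕ) : Function.Periodic (T^[n] y) (k : ℤ) := by
  induction n with
  | zero => exact hy
  | succ n ih =>
    rw [Function.iterate_succ_apply']
    have h := map_shift_nat hcomm k (T^[n] y)
    rw [show (fun j => T^[n] y (j + k)) = T^[n] y from funext ih] at h
    exact fun j => (congrFun h j).symm

/-- Spatially periodic configurations of a fixed period are finitely many, so the orbit of one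
of them revisits some configuration. -/
theorem exists_iterate_eq {A : Type*} [Fintype A] {T : (ℤ → A) → (ℤ → A)}
    (hcomm : ∀ x : ℤ → A, T (fun j => x (j + 1)) = fun j => T x (j + 1)) {k : ℕ} (hk : 0 < k)
    {y : ℤ → A} (hy : Function.Periodic y (k : ℤ)) :
    ∃ a b : ℕ, a < b ∧ T^[a] y = T^[b] y := by
  obtain ⟨a, b, hne, hab⟩ := Finite.exists_ne_map_eq_of_infinite
    (fun (n : ℕ) (r : Fin k) => T^[n] y ((r : ℕ) : ℤ))
  have heq : T^[a] y = T^[b] y := by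
    funext j
    have hmod : ∀ n, T^[n] y (j % k) = T^[n] y j := fun n => by
      have h := (iterate_periodic hcomm hy n).sub_int_mul_eq (x := j) (j / k)
      rw [← h, Int.emod_def, mul_comm]
      simp
    have h0 : 0 ≤ j % (k : ℤ) := Int.emod_nonneg _ (by omega)
    have h1 : j % (k : ℤ) < k := Int.emod_lt_of_pos _ (by omega)
    have h := congrFun hab ⟨(j % (k : ℤ)).toNat, by omega⟩
    simp only [Int.toNat_of_nonneg h0] at h
    rwa [hmod, hmod] at h
  rcases lt_or_gt_of_ne hne with h | h
  · exact ⟨a, b, h, heq⟩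
  · exact ⟨b, a, h, heq.symm⟩

/-- If `(A^ℤ, T)` is a cellular automaton (`A` finite, `T` continuous and commuting with
the shift) and `x` is an equicontinuity point, then `x` is locally eventually periodic:
every column `n ↦ T^n x_i` is eventually periodic. -/
theorem equicontinuity_point_locally_eventually_periodic
    {A : Type*} [Fintype A] (T : (ℤ → A) → (ℤ → A))
    (hcont : ∀ x : ℤ → A, ∀ ε > (0 : ℝ), ∃ δ > (0 : ℝ), ∀ y : ℤ → A,
      sdist x y < δ → sdist (T x) (T y) < ε)
    (hcomm : ∀ x : ℤ → A, T (fun j => x (j + 1)) = fun j => T x (j + 1))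
    (x : ℤ → A)
    (hx : ∀ ε > (0 : ℝ), ∃ δ > (0 : ℝ), ∀ i : ℕ, sdiam (T^[i] '' sball x δ) < ε) :
    ∀ i : ℤ, ∃ N p : ℕ, 1 ≤ p ∧ ∀ n : ℕ, N ≤ n → (T^[n + p] x) i = (T^[n] x) i := by
  intro i
  obtain ⟨δ, hδ, hball⟩ := hx ((2 : ℝ) ^ (-(i.natAbs : ℤ))) (by positivity)
  obtain ⟨m, hm⟩ := exists_pow_lt_of_lt_one hδ (by norm_num : (1 / 2 : ℝ) < 1)
  have hm' : (2 : ℝ) ^ (-(m : ℤ)) < δ := by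
    simpa [zpow_neg, one_div, inv_pow] using hm
  -- `y` repeats the word of `x` on `[-m, m]` with period `2m + 1`.
  let y : ℤ → A := fun j => x ((j + m) % ((2 * m + 1 : ℕ) : ℤ) - m)
  have hyper : Function.Periodic y ((2 * m + 1 : ℕ) : ℤ) := fun j => by
    simp only [y]
    rw [add_right_comm, Int.add_emod_right]
  have hagree : ∀ j : ℤ, j.natAbs ≤ m → x j = y j := fun j hj => by
    simp only [y]
    rw [Int.emod_eq_of_lt (by omega) (by omega), add_sub_cancel_right]
  have hxδ : x ∈ sball x δ := by simpa [sball, sdist] using hδ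
  have hyδ : y ∈ sball x δ := (sdist_le_of_agree hagree).trans_lt hm'
  have hcol : ∀ n, (T^[n] x) i = (T^[n] y) i := fun n =>
    eq_of_sdist_lt ((sdist_le_sdiam (Set.mem_image_of_mem _ hxδ)
      (Set.mem_image_of_mem _ hyδ)).trans_lt (hball n))
  obtain ⟨a, b, hab, heq⟩ := exists_iterate_eq hcomm (Nat.succ_pos _) hyper
  refine ⟨a, b - a, by omega, fun n hn => ?_⟩
  rw [hcol, hcol, show n + (b - a) = (n - a) + b by omega, Function.iterate_add_apply, ← heq,
    ← Function.iterate_add_apply, Nat.sub_add_cancel hn]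
end
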